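/- For every p ∈ L^{𝔖_n}: (𝒟_1 + 𝒟_2 + ⋯ + 𝒟_n)(p) = a·τ^{1−n}·∑_{i=1}^n X_i^{−1}·(∏_{j≠i} (τ²X_i − X_j)/(X_i − X_j))·t_i(p) + b·τ^{1−n}·∑_{i=1}^n X_i^{−1}·(∏_{j≠i} (X_i − τ²X_j)/(X_i − X_j))·t_i^{−1}(p) + c·∑_{i=1}^n X_i^{−1}·p; that is, on symmetric Laurent polynomials the operator ∑_{i=1}^n 𝒟_i acts as the explicit q-difference operator M_{a,b,c} of van Diejen type. -/

import Mathlib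

noncomputable section

/-- The Laurent polynomial ring `R[X₁^{±1}, …, Xₙ^{±1}]` in `n` variables over `R`,
realised as the monoid algebra of the additive monoid `Fin n →₀ ℤ` of exponent vectors. -/
abbrev Laur (R : Type*) [CommRing R] (n : ℕ) : Type _ :=
  AddMonoidAlgebra R (Fin n →₀ ℤ)

variable {R : Type*} [CommRing R] {n : ℕ}

/-- The monomial `c · X^a`. -/
def mono (a : Fin n →₀ ℤ) (c : R) : Laur R n := AddMonoidAlgebra.single a c

/-- The generator `X_i`. -/
def Xel (i : Fin n) : Laur R n := mono (Finsupp.single i 1) 1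

/-- The element `X_i⁻¹`. -/
def XinvEl (i : Fin n) : Laur R n := mono (Finsupp.single i (-1)) 1

/-- Multiplication by a Laurent polynomial, as a linear endomorphism. -/
def mulOp (x : Laur R n) : Module.End R (Laur R n) := LinearMap.mulLeft R x

/-- The operator of multiplication by `X_i`, with `ℕ`-indexing (`0`-based; junk value `1`
out of range). -/
def XOp (i : ℕ) : Module.End R (Laur R n) :=
  if h : i < n then mulOp (Xel ⟨i, h⟩) else 1

/-- The operator of multiplication by `X_i⁻¹`, with `ℕ`-indexing. -/
def XinvOp (i : ℕ) : Module.End R (Laur R n) :=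
  if h : i < n then mulOp (XinvEl ⟨i, h⟩) else 1

/-- Ascending product `f s * f (s+1) * ⋯ * f (s+len-1)` (equal to `1` when `len = 0`). -/
def aF {M : Type*} [Monoid M] (f : ℕ → M) (s len : ℕ) : M :=
  ((List.range' s len).map f).prod

/-- Descending product `f (s+len-1) * ⋯ * f (s+1) * f s` (equal to `1` when `len = 0`). -/
def dF {M : Type*} [Monoid M] (f : ℕ → M) (s len : ℕ) : M :=
  (((List.range' s len).map f).reverse).prod

/-- Integer power `u^z`, where `v` is a designated (two-sided) inverse of `u`. -/
def zpowOp {M : Type*} [Monoid M] (u v : M) (z : ℤ) : M :=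
  if 0 ≤ z then u ^ z.toNat else v ^ (-z).toNat

instance (F : Type*) [Field F] (n : ℕ) : IsDomain (Laur F n) :=
  NoZeroDivisors.to_isDomain _

/-- The embedding of the Laurent polynomial ring into its field of fractions. -/
def toFrac {F : Type*} [Field F] {n : ℕ} : Laur F n →+* FractionRing (Laur F n) :=
  algebraMap _ _

/-- A scalar of `F`, viewed inside the field of fractions of `L`. -/
def cF {F : Type*} [Field F] {n : ℕ} (x : F) : FractionRing (Laur F n) :=
  toFrac (algebraMap F (Laur F n) x)

/-!
For a set `A` of variables let `S_A` be the Macdonald sum over `A` of a family `fᵢ` permuted by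
`𝔖ₙ`, with weights `(α xᵢ - β xⱼ) / (xᵢ - xⱼ)`. Partial fractions give
`(xᵢ - xⱼ) S_{A∪ij} = (α xᵢ - β xⱼ) S_{A∪i} + (β xᵢ - α xⱼ) S_{A∪j} - αβ (xᵢ - xⱼ) S_A`,
which says that the Demazure–Lusztig operator with eigenvalues `α` and `-β` that mixes `xᵢ` and `xⱼ`
maps `S_{A∪i} - β S_A` to `S_{A∪ij} - β S_{A∪i}`. Applying these operators one after the other to a
single `fᵢ` and summing the results with powers of `β` therefore telescopes to `S` over all
variables.

On symmetric `p` every `T_k` acts by `τ`, and `Y_n p` and `Y_n⁻¹ p` reduce to `t_n p` and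
`T_{n-1} ⋯ T_1 t_1⁻¹ p`. Since `T_k X_{k+1}⁻¹ T_k = X_k⁻¹`, the `a`-part of `∑ 𝒟ᵢ` is such a chain
`T_i ⋯ T_{n-1}` starting from `X_n⁻¹ t_n p`, with `(α, β) = (τ, τ⁻¹)`, and the `b`-part is the chain
`T_{i-1}⁻¹ ⋯ T_1⁻¹` starting from `X_1⁻¹ t_1⁻¹ p`, with `τ` and `τ⁻¹` exchanged.
-/

section MacdonaldSum

variable {ι F K : Type*} [DecidableEq ι] [CommRing F] [Field K] [Algebra F K]

/-- The sum `∑_{i ∈ A} ∏_{j ∈ A \ {i}} (α xᵢ - β xⱼ) / (xᵢ - xⱼ) · fᵢ`, the shape of a Macdonald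
`q`-difference operator in the variables `xᵢ`, `i ∈ A`, with `fᵢ` in the role of the `i`-th shift.
It is homogeneous in `(α, β)`, which is how the prefactors `τ^{1-n}` arise. -/
def macdonaldSum (α β : F) (x f : ι → K) (A : Finset ι) : K :=
  ∑ i ∈ A, (∏ j ∈ A.erase i, (α • x i - β • x j) / (x i - x j)) * f i

theorem macdonaldSum_empty (α β : F) (x f : ι → K) : macdonaldSum α β x f ∅ = 0 := by
  simp [macdonaldSum]

theorem macdonaldSum_singleton (α β : F) (x f : ι → K) (i : ι) :
    macdonaldSum α β x f {i} = f i := by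
  simp [macdonaldSum]

theorem macdonaldSum_insert (α β : F) (x f : ι → K) {A : Finset ι} {i : ι} (hi : i ∉ A) :
    macdonaldSum α β x f (insert i A) =
      (∏ j ∈ A, (α • x i - β • x j) / (x i - x j)) * f i +
        macdonaldSum α β x (fun k ↦ (α • x k - β • x i) / (x k - x i) * f k) A := by
  rw [macdonaldSum, Finset.sum_insert hi, Finset.erase_insert hi]
  refine congrArg _ (Finset.sum_congr rfl fun k hk ↦ ?_)
  rw [Finset.erase_insert_of_ne (ne_of_mem_of_not_mem hk hi).symm,
    Finset.prod_insert (fun h ↦ hi (Finset.mem_of_mem_erase h))]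
  ring

theorem macdonaldSum_smul_smul (γ α β : F) (x f : ι → K) {A : Finset ι} {d : ℕ}
    (hA : A.card = d + 1) :
    macdonaldSum (γ * α) (γ * β) x f A = γ ^ d • macdonaldSum α β x f A := by
  simp only [macdonaldSum, Finset.smul_sum]
  refine Finset.sum_congr rfl fun i hi ↦ ?_
  have hcard : (A.erase i).card = d := by rw [Finset.card_erase_of_mem hi, hA, Nat.add_sub_cancel]
  simp only [mul_smul, ← smul_sub, smul_div_assoc, Finset.prod_smul, Finset.prod_const, hcard,
    smul_mul_assoc]

theorem sub_mul_div_mul_div_eq (α β : F) {u v z : K} (hzu : z - u ≠ 0) (hzv : z - v ≠ 0) :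
    (u - v) * ((α • z - β • v) / (z - v) * ((α • z - β • u) / (z - u))) =
      (α • u - β • v) * ((α • z - β • u) / (z - u)) +
        (β • u - α • v) * ((α • z - β • v) / (z - v)) - (α * β) • (u - v) := by
  simp only [Algebra.smul_def, map_mul]
  field_simp
  ring

theorem sub_mul_macdonaldSum_insert_insert (α β : F) {x : ι → K} (hx : Function.Injective x)
    (f : ι → K) {A : Finset ι} {i j : ι} (hi : i ∉ A) (hj : j ∉ A) (hij : i ≠ j) :
    (x i - x j) * macdonaldSum α β x f (insert j (insert i A)) =
      (α • x i - β • x j) * macdonaldSum α β x f (insert i A) +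
        (β • x i - α • x j) * macdonaldSum α β x f (insert j A) -
        (α * β) • (x i - x j) * macdonaldSum α β x f A := by
  have hji : j ∉ insert i A := by simp [hj, hij.symm]
  have hxij : x i - x j ≠ 0 := sub_ne_zero.2 (hx.ne hij)
  have hxji : x j - x i ≠ 0 := sub_ne_zero.2 (hx.ne hij.symm)
  let w (k l : ι) : K := (α • x k - β • x l) / (x k - x l)
  have hwij : (x i - x j) * w i j = α • x i - β • x j := mul_div_cancel₀ _ hxij
  have hwji : (x i - x j) * w j i = β • x i - α • x j := by
    rw [← neg_sub (x j), neg_mul, mul_div_cancel₀ _ hxji, neg_sub]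
  have hA : (x i - x j) * macdonaldSum α β x (fun k ↦ w k i * (w k j * f k)) A =
      (α • x i - β • x j) * macdonaldSum α β x (fun k ↦ w k i * f k) A +
        (β • x i - α • x j) * macdonaldSum α β x (fun k ↦ w k j * f k) A -
        (α * β) • (x i - x j) * macdonaldSum α β x f A := by
    simp only [macdonaldSum, Finset.mul_sum, ← Finset.sum_add_distrib, ← Finset.sum_sub_distrib]
    refine Finset.sum_congr rfl fun k hk ↦ ?_
    have hki : x k - x i ≠ 0 := sub_ne_zero.2 (hx.ne (ne_of_mem_of_not_mem hk hi))
    have hkj : x k - x j ≠ 0 := sub_ne_zero.2 (hx.ne (ne_of_mem_of_not_mem hk hj))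
    linear_combination (∏ l ∈ A.erase k, (α • x k - β • x l) / (x k - x l)) * f k *
      sub_mul_div_mul_div_eq α β hki hkj
  rw [macdonaldSum_insert α β x f hji, Finset.prod_insert hi, macdonaldSum_insert α β x _ hi,
    macdonaldSum_insert α β x f hi, macdonaldSum_insert α β x f hj]
  linear_combination hA + (∏ l ∈ A, w i l) * f i * hwij + (∏ l ∈ A, w j l) * f j * hwji

theorem map_macdonaldSum (s : K →ₐ[F] K) {σ : Equiv.Perm ι} {x f : ι → K}
    (hx : ∀ k, s (x k) = x (σ k)) (hf : ∀ k, s (f k) = f (σ k)) (α β : F) (A : Finset ι) :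
    s (macdonaldSum α β x f A) = macdonaldSum α β x f (A.map σ.toEmbedding) := by
  simp only [macdonaldSum, map_sum, map_mul, map_prod, map_div₀, map_sub, map_smul, hx, hf,
    Finset.sum_map, Equiv.coe_toEmbedding]
  simp only [← Equiv.coe_toEmbedding, ← Finset.map_erase, Finset.prod_map]

theorem demazureLusztig_macdonaldSum_insert_sub (s : K →ₐ[F] K) {x f : ι → K} {i j : ι}
    (hx : Function.Injective x) (hsx : ∀ k, s (x k) = x (Equiv.swap i j k))
    (hsf : ∀ k, s (f k) = f (Equiv.swap i j k)) (α β : F) {A : Finset ι} (hi : i ∉ A) (hj : j ∉ A)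
    (hij : i ≠ j) {g : K}
    (hg : g = macdonaldSum α β x f (insert i A) - β • macdonaldSum α β x f A) :
    (β • x i - α • x j) * s g + (α - β) • (x i * g) =
      (x i - x j) * (macdonaldSum α β x f (insert j (insert i A)) -
        β • macdonaldSum α β x f (insert i A)) := by
  have hswapA : A.map (Equiv.swap i j).toEmbedding = A := by
    refine (Finset.map_eq_image _ _).trans ?_
    refine (Finset.image_congr fun k hk ↦ ?_).trans Finset.image_id
    exact Equiv.swap_apply_of_ne_of_ne (ne_of_mem_of_not_mem hk hi) (ne_of_mem_of_not_mem hk hj)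
  have hswap : (insert i A).map (Equiv.swap i j).toEmbedding = insert j A := by
    rw [Finset.map_insert, hswapA, Equiv.coe_toEmbedding, Equiv.swap_apply_left]
  have hsg : s g = macdonaldSum α β x f (insert j A) - β • macdonaldSum α β x f A := by
    rw [hg, map_sub, map_smul, map_macdonaldSum s hsx hsf, map_macdonaldSum s hsx hsf, hswap,
      hswapA]
  have hinsert := sub_mul_macdonaldSum_insert_insert α β hx f hi hj hij
  rw [hsg, hg]
  simp only [Algebra.smul_def, map_mul, map_sub] at hinsert ⊢
  linear_combination -hinsert

end MacdonaldSum

section LaurentPolynomials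

theorem laur_linearMap_ext {M : Type*} [AddCommMonoid M] [Module R M] {f g : Laur R n →ₗ[R] M}
    (h : ∀ v r, f (mono v r) = g (mono v r)) : f = g := by
  ext v
  simpa [mono] using h v 1

/-- The action of `𝔖ₙ` on Laurent polynomials by permuting the variables. -/
def permute (w : Equiv.Perm (Fin n)) : Laur R n ≃ₐ[R] Laur R n :=
  AddMonoidAlgebra.domCongr R R (Finsupp.domCongr w)

theorem permute_mono (w : Equiv.Perm (Fin n)) (v : Fin n →₀ ℤ) (r : R) :
    permute w (mono v r) = mono (Finsupp.equivMapDomain w v) r := by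
  simp [permute, mono]

theorem permute_Xel (w : Equiv.Perm (Fin n)) (i : Fin n) :
    permute w (Xel i : Laur R n) = Xel (w i) := by
  rw [Xel, permute_mono, Finsupp.equivMapDomain_single, Xel]

theorem permute_XinvEl (w : Equiv.Perm (Fin n)) (i : Fin n) :
    permute w (XinvEl i : Laur R n) = XinvEl (w i) := by
  rw [XinvEl, permute_mono, Finsupp.equivMapDomain_single, XinvEl]

theorem permute_swap_permute_swap (i j : Fin n) (p : Laur R n) :
    permute (Equiv.swap i j) (permute (Equiv.swap i j) p) = p := by
  have h : (permute (Equiv.swap i j)).toLinearMap ∘ₗ (permute (Equiv.swap i j)).toLinearMap =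
      (LinearMap.id : Laur R n →ₗ[R] Laur R n) := by
    refine laur_linearMap_ext fun v r ↦ ?_
    simp [permute_mono, ← Finsupp.equivMapDomain_trans]
  exact LinearMap.congr_fun h p

theorem permute_diagonal_apply {t : Fin n → Module.End R (Laur R n)} {e : ℤ → R}
    (ht : ∀ i v r, t i (mono v r) = e (v i) • mono v r) (w : Equiv.Perm (Fin n)) (i : Fin n)
    (p : Laur R n) : permute w (t i p) = t (w i) (permute w p) := by
  have h : (permute w).toLinearMap ∘ₗ t i = t (w i) ∘ₗ (permute w).toLinearMap :=
    laur_linearMap_ext fun v r ↦ by simp [permute_mono, ht, Finsupp.equivMapDomain_apply]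
  exact LinearMap.congr_fun h p

theorem Xel_mul_XinvEl (i : Fin n) : (Xel i : Laur R n) * XinvEl i = 1 := by
  simp [Xel, XinvEl, mono, AddMonoidAlgebra.single_mul_single, AddMonoidAlgebra.one_def]

variable {F : Type*} [Field F]

theorem toFrac_injective : Function.Injective (toFrac : Laur F n →+* FractionRing (Laur F n)) :=
  IsFractionRing.injective _ _

theorem cF_mul_eq_smul (c : F) (y : FractionRing (Laur F n)) : cF c * y = c • y := by
  rw [Algebra.smul_def, IsScalarTower.algebraMap_apply F (Laur F n)]
  rfl

theorem toFrac_smul (c : F) (p : Laur F n) : toFrac (c • p) = c • toFrac p := by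
  rw [Algebra.smul_def, map_mul, ← cF_mul_eq_smul]
  rfl

theorem toFrac_Xel_injective :
    Function.Injective fun i : Fin n ↦ toFrac (Xel i : Laur F n) := by
  intro i j hij
  have h := (AddMonoidAlgebra.single_left_inj (one_ne_zero (α := F))).1 (toFrac_injective hij)
  exact (Finsupp.single_left_inj one_ne_zero).1 h

theorem toFrac_Xel_ne_zero (i : Fin n) : toFrac (Xel i : Laur F n) ≠ 0 :=
  (map_ne_zero_iff _ toFrac_injective).2 (left_ne_zero_of_mul_eq_one (Xel_mul_XinvEl i))

theorem toFrac_XinvEl (i : Fin n) : toFrac (XinvEl i : Laur F n) = (toFrac (Xel i))⁻¹ :=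
  eq_inv_of_mul_eq_one_right (by rw [← map_mul, Xel_mul_XinvEl, map_one])

/-- The action of `𝔖ₙ` on rational functions by permuting the variables. -/
def permuteFrac (w : Equiv.Perm (Fin n)) :
    FractionRing (Laur F n) ≃ₐ[F] FractionRing (Laur F n) :=
  IsFractionRing.algEquivOfAlgEquiv (permute w)

theorem permuteFrac_toFrac (w : Equiv.Perm (Fin n)) (p : Laur F n) :
    permuteFrac w (toFrac p) = toFrac (permute w p) :=
  IsFractionRing.algEquivOfAlgEquiv_algebraMap _ _

end LaurentPolynomials

section DemazureLusztig

variable {F : Type*} [Field F] {α β : F} {i j : Fin n} {U V : Module.End F (Laur F n)}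

/-- `U` is the Demazure–Lusztig operator with eigenvalues `α` and `-β` attached to the ordered pair
of variables `Xᵢ, Xⱼ`. With `α = τ`, `β = τ⁻¹` and `(i, j) = (k + 1, k)` this is `T_k`; exchanging
`α` with `β` and `i` with `j` gives `T_k⁻¹`. -/
def IsDemazureLusztig (α β : F) (i j : Fin n) (U : Module.End F (Laur F n)) : Prop :=
  ∀ p, (Xel i - Xel j) * U p =
    (β • Xel i - α • Xel j) * permute (Equiv.swap i j) p + (α - β) • (Xel i * p)

namespace IsDemazureLusztig

theorem toFrac_sub_mul (hU : IsDemazureLusztig α β i j U) (p : Laur F n) :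
    (toFrac (Xel i) - toFrac (Xel j)) * toFrac (U p) =
      (β • toFrac (Xel i) - α • toFrac (Xel j)) * permuteFrac (Equiv.swap i j) (toFrac p) +
        (α - β) • (toFrac (Xel i) * toFrac p) := by
  rw [← map_sub, ← map_mul, hU p, permuteFrac_toFrac]
  simp only [map_add, map_sub, map_mul, toFrac_smul]

theorem toFrac_eq (hU : IsDemazureLusztig α β i j U) (hij : i ≠ j) (p : Laur F n) :
    toFrac (U p) =
      ((β • toFrac (Xel i) - α • toFrac (Xel j)) * toFrac (permute (Equiv.swap i j) p) +
        (α - β) • (toFrac (Xel i) * toFrac p)) / (toFrac (Xel i) - toFrac (Xel j)) := by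
  rw [eq_div_iff (sub_ne_zero.2 (toFrac_Xel_injective.ne hij)), mul_comm, hU.toFrac_sub_mul,
    permuteFrac_toFrac]

theorem add_smul_one (hU : IsDemazureLusztig α β i j U) :
    IsDemazureLusztig β α j i (U + (β - α) • 1) := by
  intro p
  have h := hU p
  simp only [LinearMap.add_apply, LinearMap.smul_apply, Module.End.one_apply, Equiv.swap_comm j i,
    Algebra.smul_def (A := Laur F n), map_sub] at h ⊢
  linear_combination -h

theorem apply_of_permute_eq_self (hU : IsDemazureLusztig α β i j U) (hij : i ≠ j) {p : Laur F n}
    (hp : permute (Equiv.swap i j) p = p) : U p = α • p := by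
  have hsub : toFrac (Xel i : Laur F n) - toFrac (Xel j) ≠ 0 :=
    sub_ne_zero.2 (toFrac_Xel_injective.ne hij)
  apply toFrac_injective
  rw [hU.toFrac_eq hij, hp, toFrac_smul]
  simp only [Algebra.smul_def, map_sub]
  field_simp
  ring

theorem toFrac_permute_swap_apply (hU : IsDemazureLusztig α β i j U) (hij : i ≠ j) (p : Laur F n) :
    toFrac (permute (Equiv.swap i j) (U p)) =
      ((β • toFrac (Xel j) - α • toFrac (Xel i)) * toFrac p +
        (α - β) • (toFrac (Xel j) * toFrac (permute (Equiv.swap i j) p))) /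
        (toFrac (Xel j) - toFrac (Xel i)) := by
  rw [← permuteFrac_toFrac, hU.toFrac_eq hij]
  simp only [map_div₀, map_add, map_sub, map_mul, map_smul, permuteFrac_toFrac, permute_Xel,
    permute_swap_permute_swap, Equiv.swap_apply_left, Equiv.swap_apply_right]

theorem mul_eq_smul_one (hU : IsDemazureLusztig α β i j U) (hV : IsDemazureLusztig β α j i V)
    (hij : i ≠ j) : V * U = (α * β) • 1 := by
  have hsub : toFrac (Xel i : Laur F n) - toFrac (Xel j) ≠ 0 :=
    sub_ne_zero.2 (toFrac_Xel_injective.ne hij)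
  refine LinearMap.ext fun p ↦ toFrac_injective ?_
  rw [Module.End.mul_apply, hV.toFrac_eq hij.symm, Equiv.swap_comm,
    hU.toFrac_permute_swap_apply hij, hU.toFrac_eq hij, LinearMap.smul_apply, Module.End.one_apply,
    toFrac_smul, ← neg_sub (toFrac (Xel i))]
  simp only [Algebra.smul_def, map_sub, map_mul]
  field_simp
  ring

theorem mulOp_XinvEl_mul (hU : IsDemazureLusztig α β i j U) (hV : IsDemazureLusztig β α j i V)
    (hij : i ≠ j) : mulOp (XinvEl i) * U = V * mulOp (XinvEl j) := by
  have hsub : toFrac (Xel i : Laur F n) - toFrac (Xel j) ≠ 0 :=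
    sub_ne_zero.2 (toFrac_Xel_injective.ne hij)
  have hi := toFrac_Xel_ne_zero (F := F) i
  have hj := toFrac_Xel_ne_zero (F := F) j
  refine LinearMap.ext fun p ↦ toFrac_injective ?_
  change toFrac (XinvEl i * U p) = toFrac (V (XinvEl j * p))
  rw [hV.toFrac_eq hij.symm, Equiv.swap_comm, map_mul, hU.toFrac_eq hij, map_mul (permute _),
    permute_XinvEl, Equiv.swap_apply_right, map_mul, map_mul, toFrac_XinvEl, toFrac_XinvEl,
    ← neg_sub (toFrac (Xel i))]
  simp only [Algebra.smul_def, map_sub]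
  field_simp
  ring

end IsDemazureLusztig

end DemazureLusztig

section LaurMacdonaldSum

variable {F : Type*} [Field F] {α β : F} {f : Fin n → Laur F n}

/-- The Macdonald sum of the variables `Xᵢ`, `i ∈ A`, with Laurent polynomials `fᵢ` in the role of
the shifts. -/
def laurMacdonaldSum (α β : F) (f : Fin n → Laur F n) (A : Finset (Fin n)) :
    FractionRing (Laur F n) :=
  macdonaldSum α β (fun i ↦ toFrac (Xel i)) (fun i ↦ toFrac (f i)) A

theorem toFrac_eq_laurMacdonaldSum_sub (hf : ∀ w i, permute w (f i) = f (w i)) {m : ℕ}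
    {c : ℕ → Fin n} (hc : Set.InjOn c (Set.Iic m)) {U : ℕ → Module.End F (Laur F n)}
    (hU : ∀ k < m, IsDemazureLusztig α β (c k) (c (k + 1)) (U k)) {g : ℕ → Laur F n}
    (hg_zero : g 0 = f (c 0)) (hg_succ : ∀ k < m, g (k + 1) = U k (g k)) {k : ℕ} (hk : k ≤ m) :
    toFrac (g k) = laurMacdonaldSum α β f ((Finset.range (k + 1)).image c) -
      β • laurMacdonaldSum α β f ((Finset.range k).image c) := by
  have hnotMem {k l : ℕ} (hkl : k ≤ l) (hl : l ≤ m) : c l ∉ (Finset.range k).image c := by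
    simp only [Finset.mem_image, Finset.mem_range, not_exists, not_and]
    intro r hr hrl
    exact (hr.trans_le hkl).ne (hc ((hr.le.trans hkl).trans hl) hl hrl)
  induction k with
  | zero => simp [laurMacdonaldSum, macdonaldSum_empty, macdonaldSum_singleton, hg_zero]
  | succ k ih =>
    have hne : c k ≠ c (k + 1) := fun h ↦ k.succ_ne_self (hc (k.le_succ.trans hk) hk h).symm
    have hih := ih (k.le_succ.trans hk)
    rw [Finset.range_add_one, Finset.image_insert] at hih
    apply mul_left_cancel₀ (sub_ne_zero.2 (toFrac_Xel_injective.ne hne))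
    rw [hg_succ k hk, (hU k hk).toFrac_sub_mul, Finset.range_add_one, Finset.image_insert,
      Finset.range_add_one, Finset.image_insert]
    exact demazureLusztig_macdonaldSum_insert_sub (permuteFrac _).toAlgHom toFrac_Xel_injective
      (fun l ↦ by simp [permuteFrac_toFrac, permute_Xel])
      (fun l ↦ by simp [permuteFrac_toFrac, hf]) α β
      (hnotMem le_rfl (k.le_succ.trans hk)) (hnotMem k.le_succ hk) hne hih

theorem sum_pow_smul_toFrac_eq_laurMacdonaldSum (hf : ∀ w i, permute w (f i) = f (w i)) {m : ℕ}
    {c : ℕ → Fin n} (hc : Set.InjOn c (Set.Iic m)) {U : ℕ → Module.End F (Laur F n)}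
    (hU : ∀ k < m, IsDemazureLusztig α β (c k) (c (k + 1)) (U k)) {g : ℕ → Laur F n}
    (hg_zero : g 0 = f (c 0)) (hg_succ : ∀ k < m, g (k + 1) = U k (g k)) {k : ℕ} (hk : k ≤ m) :
    ∑ l ∈ Finset.range (k + 1), β ^ (k - l) • toFrac (g l) =
      laurMacdonaldSum α β f ((Finset.range (k + 1)).image c) := by
  have hchain {k : ℕ} (hk : k ≤ m) := toFrac_eq_laurMacdonaldSum_sub hf hc hU hg_zero hg_succ hk
  induction k with
  | zero => simp [hchain hk, laurMacdonaldSum, macdonaldSum_empty]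
  | succ k ih =>
    have hpow : ∑ l ∈ Finset.range (k + 1), β ^ (k + 1 - l) • toFrac (g l) =
        β • ∑ l ∈ Finset.range (k + 1), β ^ (k - l) • toFrac (g l) := by
      rw [Finset.smul_sum]
      refine Finset.sum_congr rfl fun l hl ↦ ?_
      rw [Nat.sub_add_comm (Finset.mem_range_succ_iff.1 hl), pow_succ', mul_smul]
    rw [Finset.sum_range_succ, hpow, ih (k.le_succ.trans hk), hchain hk, Nat.sub_self, pow_zero,
      one_smul, add_sub_cancel]

theorem image_range_eq_univ {m : ℕ} {c : ℕ → Fin (m + 1)} (hc : Set.InjOn c (Set.Iic m)) :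
    (Finset.range (m + 1)).image c = Finset.univ := by
  refine Finset.eq_univ_of_card _ ?_
  rw [Finset.card_image_of_injOn, Finset.card_range, Fintype.card_fin]
  exact hc.mono fun k hk ↦ Finset.mem_range_succ_iff.1 hk

theorem laurMacdonaldSum_univ_smul_smul (γ α β : F) {m : ℕ} (f : Fin (m + 1) → Laur F (m + 1)) :
    laurMacdonaldSum (γ * α) (γ * β) f Finset.univ =
      γ ^ m • laurMacdonaldSum α β f Finset.univ :=
  macdonaldSum_smul_smul γ α β _ _ (Finset.card_fin (m + 1))

theorem laurMacdonaldSum_univ_XinvEl_mul (α β : F) (f : Fin n → Laur F n) :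
    laurMacdonaldSum α β (fun i ↦ XinvEl i * f i) Finset.univ =
      ∑ i, toFrac (XinvEl i) *
        (toFrac (∏ j ∈ Finset.univ.erase i, (α • Xel i - β • Xel j)) /
          toFrac (∏ j ∈ Finset.univ.erase i, (Xel i - Xel j))) * toFrac (f i) := by
  rw [laurMacdonaldSum, macdonaldSum]
  refine Finset.sum_congr rfl fun i _ ↦ ?_
  simp only [map_mul, map_prod, map_sub, toFrac_smul, Finset.prod_div_distrib]
  ring

theorem inv_pow_eq_zpow_one_sub {G : Type*} [DivisionRing G] (x : G) (m : ℕ) :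
    x⁻¹ ^ m = x ^ ((1 : ℤ) - (m + 1 : ℕ)) := by
  rw [Nat.cast_succ, sub_add_cancel_right, zpow_neg, zpow_natCast, inv_pow]

theorem laurMacdonaldSum_inv_right {τ : F} (hτ : τ ≠ 0) {m : ℕ}
    (f : Fin (m + 1) → Laur F (m + 1)) :
    laurMacdonaldSum τ τ⁻¹ f Finset.univ =
      τ ^ ((1 : ℤ) - (m + 1 : ℕ)) • laurMacdonaldSum (τ ^ 2) 1 f Finset.univ := by
  rw [← inv_pow_eq_zpow_one_sub, ← laurMacdonaldSum_univ_smul_smul, mul_one, sq,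
    inv_mul_cancel_left₀ hτ]

theorem laurMacdonaldSum_inv_left {τ : F} (hτ : τ ≠ 0) {m : ℕ}
    (f : Fin (m + 1) → Laur F (m + 1)) :
    laurMacdonaldSum τ⁻¹ τ f Finset.univ =
      τ ^ ((1 : ℤ) - (m + 1 : ℕ)) • laurMacdonaldSum 1 (τ ^ 2) f Finset.univ := by
  rw [← inv_pow_eq_zpow_one_sub, ← laurMacdonaldSum_univ_smul_smul, mul_one, sq,
    inv_mul_cancel_left₀ hτ]

end LaurMacdonaldSum

section OrderedProducts

variable {M : Type*} [Monoid M] (f g : ℕ → M)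

theorem aF_zero (s : ℕ) : aF f s 0 = 1 := rfl

theorem dF_zero (s : ℕ) : dF f s 0 = 1 := rfl

theorem aF_succ (s l : ℕ) : aF f s (l + 1) = f s * aF f (s + 1) l := by
  simp [aF, List.range'_succ]

theorem aF_succ' (s l : ℕ) : aF f s (l + 1) = aF f s l * f (s + l) := by
  simp [aF, List.range'_concat]

theorem dF_succ (s l : ℕ) : dF f s (l + 1) = f (s + l) * dF f s l := by
  simp [dF, List.range'_concat]

theorem dF_add (s l k : ℕ) : dF f s (l + k) = dF f (s + l) k * dF f s l := by
  simp [dF, ← List.range'_append_1]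

variable {f g}

theorem aF_mul_mul_dF {x : ℕ → M} {m : ℕ} (h : ∀ k < m, f k * x (k + 1) * g k = x k) {i l : ℕ}
    (hl : i + l ≤ m) : aF f i l * x (i + l) * dF g i l = x i := by
  induction l with
  | zero => simp [aF_zero, dF_zero]
  | succ l ih =>
    rw [← ih (Nat.le_of_succ_le hl), ← h (i + l) hl, aF_succ', dF_succ]
    simp only [mul_assoc, add_assoc]

theorem aF_mul_dF {i l : ℕ} (h : ∀ k < i + l, f k * g k = 1) : aF f i l * dF g i l = 1 := by
  simpa using aF_mul_mul_dF (f := f) (g := g) (x := fun _ ↦ 1)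
    (fun k hk ↦ (congrArg (· * g k) (mul_one (f k))).trans (h k hk)) le_rfl

theorem mul_dF_eq_dF_mul {x : ℕ → M} {m : ℕ} (h : ∀ k < m, x (k + 1) * f k = g k * x k) {i : ℕ}
    (hi : i ≤ m) : x i * dF f 0 i = dF g 0 i * x 0 := by
  induction i with
  | zero => simp [dF_zero]
  | succ i ih =>
    rw [dF_succ, dF_succ, zero_add, ← mul_assoc, h i hi, mul_assoc, ih (Nat.le_of_succ_le hi),
      mul_assoc]

theorem list_prod_apply_eq_pow_smul {R V : Type*} [CommSemiring R] [AddCommMonoid V] [Module R V]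
    {e : R} {p : V} {L : List (Module.End R V)} (h : ∀ u ∈ L, u p = e • p) :
    L.prod p = e ^ L.length • p := by
  induction L with
  | nil => simp
  | cons u L ih =>
    rw [List.forall_mem_cons] at h
    rw [List.prod_cons, Module.End.mul_apply, ih h.2, map_smul, h.1, smul_smul, List.length_cons,
      pow_succ]

variable {R V : Type*} [CommSemiring R] [AddCommMonoid V] [Module R V] {e : R} {p : V}
  {f : ℕ → Module.End R V}

theorem aF_apply_eq_pow_smul {s l : ℕ} (h : ∀ k < s + l, f k p = e • p) :
    aF f s l p = e ^ l • p := by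
  rw [aF, list_prod_apply_eq_pow_smul, List.length_map, List.length_range']
  simp only [List.forall_mem_map, List.mem_range'_1]
  exact fun k hk ↦ h k hk.2

theorem dF_apply_eq_pow_smul {s l : ℕ} (h : ∀ k < s + l, f k p = e • p) :
    dF f s l p = e ^ l • p := by
  rw [dF, list_prod_apply_eq_pow_smul, List.length_reverse, List.length_map, List.length_range']
  simp only [List.mem_reverse, List.forall_mem_map, List.mem_range'_1]
  exact fun k hk ↦ h k hk.2

end OrderedProducts

section DemazureLusztigFamily

variable {F : Type*} [Field F] {m : ℕ} {τ : F}

/-- `T k` and `Ti k`, `k + 1 < n`, are the operators `T_{k+1}` and `T_{k+1}⁻¹` of the paper, whose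
indices start from `1`; nothing is required of them when `k + 1 ≥ n`. -/
structure IsDemazureLusztigFamily (τ : F) (T Ti : ℕ → Module.End F (Laur F n)) : Prop where
  isDemazureLusztig : ∀ ⦃i j : Fin n⦄, (i : ℕ) = j + 1 → IsDemazureLusztig τ τ⁻¹ i j (T j)
  isDemazureLusztig_inv : ∀ ⦃i j : Fin n⦄, (i : ℕ) = j + 1 → IsDemazureLusztig τ⁻¹ τ j i (Ti j)

theorem isDemazureLusztigFamily_of_add_smul_one {T Ti : ℕ → Module.End F (Laur F n)}
    (hT : ∀ (k : ℕ) (hk : k + 1 < n),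
      IsDemazureLusztig τ τ⁻¹ ⟨k + 1, hk⟩ ⟨k, k.lt_of_succ_lt hk⟩ (T k))
    (hTi : ∀ k, Ti k = T k + (τ⁻¹ - τ) • (1 : Module.End F (Laur F n))) :
    IsDemazureLusztigFamily τ T Ti := by
  have hT' ⦃i j : Fin n⦄ (hij : (i : ℕ) = j + 1) : IsDemazureLusztig τ τ⁻¹ i j (T j) := by
    obtain ⟨i, hi⟩ := i
    obtain rfl : i = j + 1 := hij
    exact hT j hi
  exact ⟨hT', fun i j hij ↦ hTi j ▸ (hT' hij).add_smul_one⟩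

theorem XinvOp_eq_mulOp {i : ℕ} (hi : i < n) :
    (XinvOp i : Module.End F (Laur F n)) = mulOp (XinvEl ⟨i, hi⟩) :=
  dif_pos hi

theorem XinvOp_apply {i : ℕ} (hi : i < n) (p : Laur F n) : XinvOp i p = XinvEl ⟨i, hi⟩ * p := by
  rw [XinvOp_eq_mulOp hi]
  rfl

namespace IsDemazureLusztigFamily

variable {T Ti : ℕ → Module.End F (Laur F n)} {k : ℕ} {p : Laur F n}

theorem apply_eq_smul (h : IsDemazureLusztigFamily τ T Ti) (hp : ∀ w, permute w p = p)
    (hk : k + 1 < n) : T k p = τ • p :=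
  have hT := h.isDemazureLusztig (i := ⟨k + 1, hk⟩) (j := ⟨k, k.lt_of_succ_lt hk⟩) rfl
  hT.apply_of_permute_eq_self (by simp) (hp _)

theorem inv_apply_eq_smul (h : IsDemazureLusztigFamily τ T Ti) (hp : ∀ w, permute w p = p)
    (hk : k + 1 < n) : Ti k p = τ⁻¹ • p :=
  have hTi := h.isDemazureLusztig_inv (i := ⟨k + 1, hk⟩) (j := ⟨k, k.lt_of_succ_lt hk⟩) rfl
  hTi.apply_of_permute_eq_self (by simp) (hp _)

theorem mul_inv_eq_one (h : IsDemazureLusztigFamily τ T Ti) (hτ : τ ≠ 0) (hk : k + 1 < n) :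
    T k * Ti k = 1 := by
  have hT := h.isDemazureLusztig (i := ⟨k + 1, hk⟩) (j := ⟨k, k.lt_of_succ_lt hk⟩) rfl
  rw [(h.isDemazureLusztig_inv rfl).mul_eq_smul_one hT (by simp), inv_mul_cancel₀ hτ, one_smul]

theorem inv_mul_eq_one (h : IsDemazureLusztigFamily τ T Ti) (hτ : τ ≠ 0) (hk : k + 1 < n) :
    Ti k * T k = 1 := by
  have hT := h.isDemazureLusztig (i := ⟨k + 1, hk⟩) (j := ⟨k, k.lt_of_succ_lt hk⟩) rfl
  rw [hT.mul_eq_smul_one (h.isDemazureLusztig_inv rfl) (by simp), mul_inv_cancel₀ hτ, one_smul]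

theorem XinvOp_mul (h : IsDemazureLusztigFamily τ T Ti) (hk : k + 1 < n) :
    XinvOp (k + 1) * T k = Ti k * XinvOp k := by
  have hT := h.isDemazureLusztig (i := ⟨k + 1, hk⟩) (j := ⟨k, k.lt_of_succ_lt hk⟩) rfl
  rw [XinvOp_eq_mulOp hk, XinvOp_eq_mulOp (k.lt_of_succ_lt hk)]
  exact hT.mulOp_XinvEl_mul (h.isDemazureLusztig_inv rfl) (by simp)

theorem mul_XinvOp_mul (h : IsDemazureLusztigFamily τ T Ti) (hτ : τ ≠ 0) (hk : k + 1 < n) :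
    T k * XinvOp (k + 1) * T k = XinvOp k := by
  rw [mul_assoc, h.XinvOp_mul hk, ← mul_assoc, h.mul_inv_eq_one hτ hk, one_mul]

variable {T Ti : ℕ → Module.End F (Laur F (m + 1))}

theorem aF_inv_mul_dF (h : IsDemazureLusztigFamily τ T Ti) (hτ : τ ≠ 0) :
    aF Ti 0 m * dF T 0 m = 1 :=
  aF_mul_dF fun _ hk ↦ h.inv_mul_eq_one hτ (by omega)

theorem aF_mul_XinvOp_mul_dF (h : IsDemazureLusztigFamily τ T Ti) (hτ : τ ≠ 0) {i : ℕ}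
    (hi : i ≤ m) : aF T i (m - i) * XinvOp m * dF T i (m - i) = XinvOp i := by
  have hconj := aF_mul_mul_dF (x := XinvOp) (m := m)
    (fun k hk ↦ h.mul_XinvOp_mul hτ (Nat.succ_lt_succ hk)) (Nat.add_sub_cancel' hi).le
  rwa [Nat.add_sub_cancel' hi] at hconj

theorem aF_mul_XinvOp_mul_dF_zero (h : IsDemazureLusztigFamily τ T Ti) (hτ : τ ≠ 0) {i : ℕ}
    (hi : i ≤ m) : aF T i (m - i) * XinvOp m * dF T 0 m = dF Ti 0 i * XinvOp 0 := by
  have hsplit : dF T 0 m = dF T i (m - i) * dF T 0 i := by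
    simpa only [Nat.add_sub_cancel' hi, zero_add] using dF_add T 0 i (m - i)
  rw [hsplit, ← mul_assoc, h.aF_mul_XinvOp_mul_dF hτ hi]
  exact mul_dF_eq_dF_mul (m := m) (fun k hk ↦ h.XinvOp_mul (Nat.succ_lt_succ hk)) hi

theorem vanDiejen_apply (h : IsDemazureLusztigFamily τ T Ti) (hτ : τ ≠ 0) (a b c : F)
    {Y Yi : Module.End F (Laur F (m + 1))} {p u v : Laur F (m + 1)} (hp : ∀ w, permute w p = p)
    (hY : Y p = τ⁻¹ ^ m • u) (hYi : Yi p = dF T 0 m v) {i : ℕ} (hi : i ≤ m) :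
    (aF T i (m - i) * (XinvOp m * (a • Y + b • Yi + c • 1)) * dF T i (m - i) :
        Module.End F (Laur F (m + 1))) p =
      a • τ⁻¹ ^ i • aF T i (m - i) (XinvEl (Fin.last m) * u) +
        b • τ ^ (m - i) • dF Ti 0 i (XinvEl 0 * v) + c • XinvOp i p := by
  have hdF : dF T i (m - i) p = τ ^ (m - i) • p :=
    dF_apply_eq_pow_smul fun k hk ↦ h.apply_eq_smul hp (by omega)
  have hpow : τ ^ (m - i) * τ⁻¹ ^ m = τ⁻¹ ^ i := by
    rw [inv_pow, inv_pow, ← div_eq_mul_inv, div_eq_iff (pow_ne_zero _ hτ), inv_mul_eq_div,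
      eq_div_iff (pow_ne_zero _ hτ), ← pow_add, Nat.sub_add_cancel hi]
  have hXv : XinvOp 0 v = XinvEl 0 * v := XinvOp_apply m.succ_pos v
  have hXu : XinvOp m u = XinvEl (Fin.last m) * u := XinvOp_apply m.lt_succ_self u
  have hv : aF T i (m - i) (XinvOp m (dF T 0 m v)) = dF Ti 0 i (XinvEl 0 * v) :=
    hXv ▸ LinearMap.congr_fun (h.aF_mul_XinvOp_mul_dF_zero hτ hi) v
  have hc : aF T i (m - i) (XinvOp m (τ ^ (m - i) • p)) = XinvOp i p :=
    hdF ▸ LinearMap.congr_fun (h.aF_mul_XinvOp_mul_dF hτ hi) p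
  rw [map_smul, map_smul] at hc
  simp only [Module.End.mul_apply, hdF, LinearMap.add_apply, LinearMap.smul_apply,
    Module.End.one_apply, map_smul, map_add, hY, hYi, hv, hXu, ← hc, ← hpow, mul_smul]
  module

theorem sum_pow_smul_toFrac_aF_apply (h : IsDemazureLusztigFamily τ T Ti)
    {f : Fin (m + 1) → Laur F (m + 1)} (hf : ∀ w i, permute w (f i) = f (w i)) :
    ∑ i ∈ Finset.range (m + 1), τ⁻¹ ^ i • toFrac (aF T i (m - i) (f (Fin.last m))) =
      laurMacdonaldSum τ τ⁻¹ f Finset.univ := by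
  let c (k : ℕ) : Fin (m + 1) := Fin.ofNat (m + 1) (m - k)
  let g (k : ℕ) : Laur F (m + 1) := aF T (m - k) k (f (Fin.last m))
  have hc_val (k : ℕ) : (c k : ℕ) = m - k := Nat.mod_eq_of_lt (by omega)
  have hc : Set.InjOn c (Set.Iic m) := fun k hk l hl hkl ↦ by
    have hsub : m - k = m - l := by rw [← hc_val, ← hc_val, hkl]
    exact (tsub_right_inj hk hl).1 hsub
  have hU (k : ℕ) (hk : k < m) : IsDemazureLusztig τ τ⁻¹ (c k) (c (k + 1)) (T (c (k + 1))) :=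
    h.isDemazureLusztig (by rw [hc_val, hc_val]; omega)
  have hg_zero : g 0 = f (c 0) := congrArg f (Fin.ext (hc_val 0).symm)
  have hg_succ (k : ℕ) (hk : k < m) : g (k + 1) = T (c (k + 1)) (g k) := by
    have hsub : m - (k + 1) + 1 = m - k := by omega
    simp only [g, aF_succ, Module.End.mul_apply, hsub, hc_val]
  rw [← image_range_eq_univ hc,
    ← sum_pow_smul_toFrac_eq_laurMacdonaldSum hf hc hU hg_zero hg_succ le_rfl,
    ← Finset.sum_range_reflect]
  refine Finset.sum_congr rfl fun k hk ↦ ?_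
  rw [Nat.add_sub_cancel, Nat.sub_sub_self (Finset.mem_range_succ_iff.1 hk)]

theorem sum_pow_smul_toFrac_dF_apply (h : IsDemazureLusztigFamily τ T Ti)
    {f : Fin (m + 1) → Laur F (m + 1)} (hf : ∀ w i, permute w (f i) = f (w i)) :
    ∑ i ∈ Finset.range (m + 1), τ ^ (m - i) • toFrac (dF Ti 0 i (f 0)) =
      laurMacdonaldSum τ⁻¹ τ f Finset.univ := by
  let c (k : ℕ) : Fin (m + 1) := Fin.ofNat (m + 1) k
  let g (k : ℕ) : Laur F (m + 1) := dF Ti 0 k (f 0)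
  have hc_val {k : ℕ} (hk : k ≤ m) : (c k : ℕ) = k := Nat.mod_eq_of_lt (Nat.lt_succ_of_le hk)
  have hc : Set.InjOn c (Set.Iic m) := fun k hk l hl hkl ↦ by
    rw [← hc_val hk, ← hc_val hl, hkl]
  have hU (k : ℕ) (hk : k < m) : IsDemazureLusztig τ⁻¹ τ (c k) (c (k + 1)) (Ti (c k)) :=
    h.isDemazureLusztig_inv (by rw [hc_val hk, hc_val hk.le])
  have hg_zero : g 0 = f (c 0) := congrArg f (Fin.ext (hc_val m.zero_le).symm)
  have hg_succ (k : ℕ) (hk : k < m) : g (k + 1) = Ti (c k) (g k) := by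
    simp only [g, dF_succ, Module.End.mul_apply, zero_add, hc_val hk.le]
  rw [← image_range_eq_univ hc,
    ← sum_pow_smul_toFrac_eq_laurMacdonaldSum hf hc hU hg_zero hg_succ le_rfl]

end IsDemazureLusztigFamily

end DemazureLusztigFamily

section VanDiejen

variable {F : Type*} [Field F] {m : ℕ} {q τ : F}

theorem shift_apply_shift_inv (hq : q ≠ 0) {i : Fin n} {u v : Module.End F (Laur F n)}
    (hu : ∀ w r, u (mono w r) = q ^ w i • mono w r)
    (hv : ∀ w r, v (mono w r) = q ^ (-w i) • mono w r) (p : Laur F n) : u (v p) = p := by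
  have huv : u * v = 1 := laur_linearMap_ext fun w r ↦ by
    rw [Module.End.mul_apply, hv, map_smul, hu, smul_smul, ← zpow_add₀ hq, neg_add_cancel,
      zpow_zero, one_smul, Module.End.one_apply]
  exact LinearMap.congr_fun huv p

theorem piInv_apply {piInv : Module.End F (Laur F (m + 1))}
    {t : Fin (m + 1) → Module.End F (Laur F (m + 1))}
    (hpiInv : ∀ v r, piInv (mono v r) =
      q ^ v 0 • mono (Finsupp.equivMapDomain (finRotate (m + 1)).symm v) r)
    (ht : ∀ i v r, t i (mono v r) = q ^ v i • mono v r) (p : Laur F (m + 1)) :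
    piInv p = permute (finRotate (m + 1)).symm (t 0 p) := by
  have h : piInv = (permute (finRotate (m + 1)).symm).toLinearMap ∘ₗ t 0 :=
    laur_linearMap_ext fun v r ↦ by simp [hpiInv, ht, permute_mono]
  exact LinearMap.congr_fun h p

theorem permute_finRotate_symm_shift {t : Fin (m + 1) → Module.End F (Laur F (m + 1))}
    (ht : ∀ i v r, t i (mono v r) = q ^ v i • mono v r) {p : Laur F (m + 1)}
    (hp : ∀ w, permute w p = p) :
    permute (finRotate (m + 1)).symm (t 0 p) = t (Fin.last m) p := by
  rw [permute_diagonal_apply ht, hp, (Equiv.symm_apply_eq _).2 finRotate_last.symm]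

namespace IsDemazureLusztigFamily

variable {T Ti : ℕ → Module.End F (Laur F (m + 1))} {piInv Y Yi : Module.End F (Laur F (m + 1))}
  {t ti : Fin (m + 1) → Module.End F (Laur F (m + 1))} {p : Laur F (m + 1)}

theorem cherednik_apply (h : IsDemazureLusztigFamily τ T Ti)
    (hpiInv : ∀ v r, piInv (mono v r) =
      q ^ v 0 • mono (Finsupp.equivMapDomain (finRotate (m + 1)).symm v) r)
    (ht : ∀ i v r, t i (mono v r) = q ^ v i • mono v r) (hp : ∀ w, permute w p = p) :
    (piInv * aF Ti 0 m : Module.End F (Laur F (m + 1))) p = τ⁻¹ ^ m • t (Fin.last m) p := by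
  have haF : aF Ti 0 m p = τ⁻¹ ^ m • p :=
    aF_apply_eq_pow_smul fun k hk ↦ h.inv_apply_eq_smul hp (by omega)
  rw [Module.End.mul_apply, haF, map_smul, piInv_apply hpiInv ht,
    permute_finRotate_symm_shift ht hp]

theorem cherednik_inv_apply (h : IsDemazureLusztigFamily τ T Ti) (hq : q ≠ 0) (hτ : τ ≠ 0)
    (hpiInv : ∀ v r, piInv (mono v r) =
      q ^ v 0 • mono (Finsupp.equivMapDomain (finRotate (m + 1)).symm v) r)
    (ht : ∀ i v r, t i (mono v r) = q ^ v i • mono v r)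
    (hti : ∀ i v r, ti i (mono v r) = q ^ (-v i) • mono v r)
    (hYi : Yi * (piInv * aF Ti 0 m) = 1) (hp : ∀ w, permute w p = p) :
    Yi p = dF T 0 m (ti 0 p) := by
  have hpi : piInv (ti 0 p) = p := by
    rw [piInv_apply hpiInv ht, shift_apply_shift_inv hq (ht 0) (hti 0), hp]
  have hmul : Yi * piInv = dF T 0 m := by
    rw [← mul_one (Yi * piInv), ← h.aF_inv_mul_dF hτ, ← mul_assoc, mul_assoc Yi, hYi, one_mul]
  rw [← hmul, Module.End.mul_apply, hpi]

theorem toFrac_sum_vanDiejen_apply (h : IsDemazureLusztigFamily τ T Ti) (hτ : τ ≠ 0) (a b c : F)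
    {D : ℕ → Module.End F (Laur F (m + 1))}
    (hD : ∀ i, D i = aF T i (m - i) * (XinvOp m * (a • Y + b • Yi + c • 1)) * dF T i (m - i))
    {u v : Fin (m + 1) → Laur F (m + 1)} (hu : ∀ w i, permute w (u i) = u (w i))
    (hv : ∀ w i, permute w (v i) = v (w i)) (hp : ∀ w, permute w p = p)
    (hY : Y p = τ⁻¹ ^ m • u (Fin.last m)) (hYi : Yi p = dF T 0 m (v 0)) :
    toFrac ((∑ i ∈ Finset.range (m + 1), D i) p) =
      a • laurMacdonaldSum τ τ⁻¹ (fun i ↦ XinvEl i * u i) Finset.univ +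
        b • laurMacdonaldSum τ⁻¹ τ (fun i ↦ XinvEl i * v i) Finset.univ +
        c • ∑ i, toFrac (XinvEl i) * toFrac p := by
  have hXinv : ∑ i : Fin (m + 1), toFrac (XinvEl i) * toFrac p =
      ∑ i ∈ Finset.range (m + 1), toFrac (XinvOp i p) := by
    simp only [Finset.sum_range, XinvOp_apply (Fin.is_lt _), map_mul]
  rw [← h.sum_pow_smul_toFrac_aF_apply fun w i ↦ by rw [map_mul, permute_XinvEl, hu],
    ← h.sum_pow_smul_toFrac_dF_apply fun w i ↦ by rw [map_mul, permute_XinvEl, hv], hXinv]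
  simp only [LinearMap.sum_apply, map_sum, Finset.smul_sum, ← Finset.sum_add_distrib]
  refine Finset.sum_congr rfl fun i hi ↦ ?_
  rw [hD, h.vanDiejen_apply hτ a b c hp hY hYi (Finset.mem_range_succ_iff.1 hi)]
  simp only [map_add, toFrac_smul]

end IsDemazureLusztigFamily

end VanDiejen

theorem statement19_general
    (F : Type*) [Field F] (n : ℕ) [NeZero n] (q τ : F) (hq : q ≠ 0) (hτ : τ ≠ 0)
    (W : Equiv.Perm (Fin n) → Module.End F (Laur F n))
    (hW : ∀ (w : Equiv.Perm (Fin n)) (v : Fin n →₀ ℤ) (r : F),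
      W w (mono v r) = mono (Finsupp.equivMapDomain w v) r)
    (T Ti : ℕ → Module.End F (Laur F n))
    (hT : ∀ (k : ℕ) (hk : k + 1 < n) (p : Laur F n),
      (Xel ⟨k + 1, hk⟩ - Xel ⟨k, Nat.lt_of_succ_lt hk⟩) * T k p
        = (τ⁻¹ • Xel ⟨k + 1, hk⟩ - τ • Xel ⟨k, Nat.lt_of_succ_lt hk⟩)
            * W (Equiv.swap ⟨k, Nat.lt_of_succ_lt hk⟩ ⟨k + 1, hk⟩) p
          + (τ - τ⁻¹) • (Xel ⟨k + 1, hk⟩ * p))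
    (hTi : ∀ k, Ti k = T k + (τ⁻¹ - τ) • (1 : Module.End F (Laur F n)))
    (piInv : Module.End F (Laur F n))
    (hpiInv : ∀ (v : Fin n →₀ ℤ) (r : F),
      piInv (mono v r)
        = q ^ (v 0) • mono (Finsupp.equivMapDomain (finRotate n).symm v) r)
    (Y Yi : ℕ → Module.End F (Laur F n))
    (hY : ∀ i, Y i = aF T i (n - 1 - i) * piInv * aF Ti 0 i)
    (hYinv : ∀ i, i < n → Y i * Yi i = 1 ∧ Yi i * Y i = 1)
    (t ti : Fin n → Module.End F (Laur F n))
    (ht : ∀ (i : Fin n) (v : Fin n →₀ ℤ) (r : F), t i (mono v r) = q ^ (v i) • mono v r)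
    (hti : ∀ (i : Fin n) (v : Fin n →₀ ℤ) (r : F),
      ti i (mono v r) = q ^ (-(v i)) • mono v r)
    (a b c : F)
    (Dc : ℕ → Module.End F (Laur F n))
    (hDc : ∀ i, Dc i = aF T i (n - 1 - i)
        * (XinvOp (n - 1) * (a • Y (n - 1) + b • Yi (n - 1) + c • 1))
        * dF T i (n - 1 - i))
    (p : Laur F n) (hp : ∀ w, W w p = p) :
    toFrac ((∑ i ∈ Finset.range n, Dc i) p)
      = cF (a * τ ^ ((1 : ℤ) - n)) *
          (∑ i : Fin n, toFrac (XinvEl i)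
            * (toFrac (∏ j ∈ Finset.univ.erase i, (τ ^ 2 • Xel i - Xel j))
                / toFrac (∏ j ∈ Finset.univ.erase i, (Xel i - Xel j)))
            * toFrac (t i p))
        + cF (b * τ ^ ((1 : ℤ) - n)) *
          (∑ i : Fin n, toFrac (XinvEl i)
            * (toFrac (∏ j ∈ Finset.univ.erase i, (Xel i - τ ^ 2 • Xel j))
                / toFrac (∏ j ∈ Finset.univ.erase i, (Xel i - Xel j)))
            * toFrac (ti i p))
        + cF c * ∑ i : Fin n, toFrac (XinvEl i) * toFrac p := by
  obtain ⟨m, rfl⟩ := Nat.exists_eq_succ_of_ne_zero (NeZero.ne n)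
  have hWp (w) (p : Laur F (m + 1)) : W w p = permute w p :=
    LinearMap.congr_fun (laur_linearMap_ext (g := (permute w).toLinearMap) fun v r ↦
      (hW w v r).trans (permute_mono w v r).symm) p
  simp only [hWp] at hT hp
  have hfam : IsDemazureLusztigFamily τ T Ti :=
    isDemazureLusztigFamily_of_add_smul_one (fun k hk p ↦ by rw [hT, Equiv.swap_comm]) hTi
  have hYm : Y m = piInv * aF Ti 0 m := by simp [hY, aF_zero]
  have hYp : Y m p = τ⁻¹ ^ m • t (Fin.last m) p := hYm ▸ hfam.cherednik_apply hpiInv ht hp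
  have hYip : Yi m p = dF T 0 m (ti 0 p) :=
    hfam.cherednik_inv_apply hq hτ hpiInv ht hti (hYm ▸ (hYinv m m.lt_succ_self).2) hp
  have hshift (w i) : permute w (t i p) = t (w i) p := by rw [permute_diagonal_apply ht, hp]
  have hshift_inv (w i) : permute w (ti i p) = ti (w i) p := by
    rw [permute_diagonal_apply (e := fun z ↦ q ^ (-z)) hti, hp]
  rw [hfam.toFrac_sum_vanDiejen_apply hτ a b c hDc hshift hshift_inv hp hYp hYip]
  simp only [laurMacdonaldSum_inv_right hτ, laurMacdonaldSum_inv_left hτ,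
    laurMacdonaldSum_univ_XinvEl_mul, one_smul, smul_smul, cF_mul_eq_smul]

/-- On `𝔖_n`-invariant Laurent polynomials `p`, the operator
`𝒟_1 + ⋯ + 𝒟_n` acts as the explicit van Diejen-type `q`-difference operator `M_{a,b,c}`
(the identity is stated in the field of fractions of `L`, where the rational coefficients
of `M_{a,b,c}` live). -/
theorem statement19
    (F : Type*) [Field F] (n : ℕ) [NeZero n]
    (q τ : F) (hq : q ≠ 0) (hqroot : ∀ m : ℕ, m ≠ 0 → q ^ m ≠ 1) (hτ : τ ≠ 0)
    -- the action of the symmetric group permuting the variables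
    (W : Equiv.Perm (Fin n) → Module.End F (Laur F n))
    (hW : ∀ (w : Equiv.Perm (Fin n)) (v : Fin n →₀ ℤ) (r : F),
      W w (mono v r) = mono (Finsupp.equivMapDomain w v) r)
    -- the Demazure–Lusztig operators `T_k` and their inverses `Ti k = T k + τ⁻¹ - τ`
    (T Ti : ℕ → Module.End F (Laur F n))
    (hT : ∀ (k : ℕ) (hk : k + 1 < n) (p : Laur F n),
      (Xel ⟨k + 1, hk⟩ - Xel ⟨k, Nat.lt_of_succ_lt hk⟩) * T k p
        = (τ⁻¹ • Xel ⟨k + 1, hk⟩ - τ • Xel ⟨k, Nat.lt_of_succ_lt hk⟩)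
            * W (Equiv.swap ⟨k, Nat.lt_of_succ_lt hk⟩ ⟨k + 1, hk⟩) p
          + (τ - τ⁻¹) • (Xel ⟨k + 1, hk⟩ * p))
    (hTi : ∀ k, Ti k = T k + (τ⁻¹ - τ) • (1 : Module.End F (Laur F n)))
    (hTinv : ∀ k, k + 1 < n → T k * Ti k = 1 ∧ Ti k * T k = 1)
    -- the operator `π⁻¹`
    (piInv : Module.End F (Laur F n))
    (hpiInv : ∀ (v : Fin n →₀ ℤ) (r : F),
      piInv (mono v r)
        = q ^ (v 0) • mono (Finsupp.equivMapDomain (finRotate n).symm v) r)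
    -- the operators `Y_i = T_i ⋯ T_{n-1} ⬝ π⁻¹ ⬝ T_1⁻¹ ⋯ T_{i-1}⁻¹` and their inverses
    (Y Yi : ℕ → Module.End F (Laur F n))
    (hY : ∀ i, Y i = aF T i (n - 1 - i) * piInv * aF Ti 0 i)
    (hYinv : ∀ i, i < n → Y i * Yi i = 1 ∧ Yi i * Y i = 1)
    -- the `q`-shift operators `t_i` and their inverses
    (t ti : Fin n → Module.End F (Laur F n))
    (ht : ∀ (i : Fin n) (v : Fin n →₀ ℤ) (r : F), t i (mono v r) = q ^ (v i) • mono v r)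
    (hti : ∀ (i : Fin n) (v : Fin n →₀ ℤ) (r : F),
      ti i (mono v r) = q ^ (-(v i)) • mono v r)
    -- the van Diejen-type operators `𝒟_i` with parameters `a`, `b`, `c`
    (a b c : F)
    (Dc : ℕ → Module.End F (Laur F n))
    (hDc : ∀ i, Dc i = aF T i (n - 1 - i)
        * (XinvOp (n - 1) * (a • Y (n - 1) + b • Yi (n - 1) + c • 1))
        * dF T i (n - 1 - i))
    :
    ∀ p : Laur F n, (∀ w : Equiv.Perm (Fin n), W w p = p) →
      toFrac ((∑ i ∈ Finset.range n, Dc i) p)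
        = cF (a * τ ^ ((1 : ℤ) - n)) *
            (∑ i : Fin n, toFrac (XinvEl i)
              * (toFrac (∏ j ∈ Finset.univ.erase i, (τ ^ 2 • Xel i - Xel j))
                  / toFrac (∏ j ∈ Finset.univ.erase i, (Xel i - Xel j)))
              * toFrac (t i p))
          + cF (b * τ ^ ((1 : ℤ) - n)) *
            (∑ i : Fin n, toFrac (XinvEl i)
              * (toFrac (∏ j ∈ Finset.univ.erase i, (Xel i - τ ^ 2 • Xel j))
                  / toFrac (∏ j ∈ Finset.univ.erase i, (Xel i - Xel j)))
              * toFrac (ti i p))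
          + cF c * ∑ i : Fin n, toFrac (XinvEl i) * toFrac p :=
  statement19_general F n q τ hq hτ W hW T Ti hT hTi piInv hpiInv Y Yi hY hYinv t ti ht hti a b c Dc
    hDc
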